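/- Let n > 2 and let G be a finite group generated by n pairwise distinct non-identity elements g1, …, gn. Then there exists a finite simple graph Γ on exactly (2n+6)·|G| vertices that is cubic (3-regular) and whose automorphism group is isomorphic to G. -/

import Mathlib

namespace FruchtCubic

/-- The vertex types of the gadget attached to each group element. -/
inductive P (n : ℕ) : Type
  | r | t1 | t2 | s1 | s2 | c
  | o (i : Fin n)
  | e (i : Fin n)

variable {n : ℕ} {G : Type*} [Group G]

/-- Directed half of the adjacency relation. -/
def R (g : Fin n → G) (x : G) (u : P n) (y : G) (v : P n) : Prop :=
  match u, v with
  | .r, .t1 => x = y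
  | .r, .t2 => x = y
  | .t1, .t2 => x = y
  | .t1, .s1 => x = y
  | .t2, .s2 => x = y
  | .s1, .s2 => x = y
  | .s2, .c => x = y
  | .r, .o i => x = y ∧ i.val = 0
  | .s1, .e i => x = y ∧ i.val = 0
  | .o i, .o j => x = y ∧ i.val + 1 = j.val
  | .e i, .e j => x = y ∧ i.val + 1 = j.val
  | .o i, .c => x = y ∧ i.val + 1 = n
  | .e i, .c => x = y ∧ i.val + 1 = n
  | .o i, .e j => i = j ∧ y = x * g i
  | _, _ => False

/-- The cubic graph. -/
def Gr (g : Fin n → G) : SimpleGraph (G × P n) where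
  Adj a b := R g a.1 a.2 b.1 b.2 ∨ R g b.1 b.2 a.1 a.2
  symm := ⟨fun a b h => h.symm⟩
  loopless := ⟨by
    rintro ⟨x, u⟩ h
    cases u <;> simp [R] at h⟩

section nbrs
variable (g : Fin n → G) (x : G) (w : G × P n)

theorem adj_r (h0 : 0 < n) : (Gr g).Adj (x, .r) w ↔
    w = (x, .t1) ∨ w = (x, .t2) ∨ w = (x, .o ⟨0, h0⟩) := by
  obtain ⟨y, v⟩ := w
  cases v <;> simp [Gr, R, Fin.ext_iff] <;> grind

theorem adj_t1 : (Gr g).Adj (x, .t1) w ↔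
    w = (x, .r) ∨ w = (x, .t2) ∨ w = (x, .s1) := by
  obtain ⟨y, v⟩ := w
  cases v <;> simp [Gr, R] <;> grind

theorem adj_t2 : (Gr g).Adj (x, .t2) w ↔
    w = (x, .r) ∨ w = (x, .t1) ∨ w = (x, .s2) := by
  obtain ⟨y, v⟩ := w
  cases v <;> simp [Gr, R] <;> grind

theorem adj_s1 (h0 : 0 < n) : (Gr g).Adj (x, .s1) w ↔
    w = (x, .t1) ∨ w = (x, .s2) ∨ w = (x, .e ⟨0, h0⟩) := by
  obtain ⟨y, v⟩ := w
  cases v <;> simp [Gr, R, Fin.ext_iff] <;> grind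

theorem adj_s2 : (Gr g).Adj (x, .s2) w ↔
    w = (x, .t2) ∨ w = (x, .s1) ∨ w = (x, .c) := by
  obtain ⟨y, v⟩ := w
  cases v <;> simp [Gr, R] <;> grind

theorem adj_c (h0 : 0 < n) : (Gr g).Adj (x, .c) w ↔
    w = (x, .s2) ∨ w = (x, .o ⟨n - 1, by omega⟩) ∨ w = (x, .e ⟨n - 1, by omega⟩) := by
  obtain ⟨y, v⟩ := w
  cases v <;> simp [Gr, R, Fin.ext_iff] <;> grind

theorem adj_o (i : Fin n) : (Gr g).Adj (x, .o i) w ↔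
    w = (x, if h : i.val = 0 then .r else .o ⟨i.val - 1, by omega⟩) ∨
    w = (x, if h : i.val + 1 = n then .c else .o ⟨i.val + 1, by omega⟩) ∨
    w = (x * g i, .e i) := by
  obtain ⟨y, v⟩ := w
  split_ifs <;> cases v <;> simp [Gr, R, Fin.ext_iff] <;> grind

theorem adj_e (i : Fin n) : (Gr g).Adj (x, .e i) w ↔
    w = (x, if h : i.val = 0 then .s1 else .e ⟨i.val - 1, by omega⟩) ∨
    w = (x, if h : i.val + 1 = n then .c else .e ⟨i.val + 1, by omega⟩) ∨
    w = (x * (g i)⁻¹, .o i) := by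
  obtain ⟨y, v⟩ := w
  have key : ∀ j, x = y * g j ↔ y = x * (g j)⁻¹ := fun j => by
    rw [eq_mul_inv_iff_mul_eq, eq_comm]
  split_ifs <;> cases v <;> simp [Gr, R, Fin.ext_iff, key] <;> grind

end nbrs

open scoped Classical in
theorem deg_of {V : Type*} [Fintype V] (Γ : SimpleGraph V) (v a b c : V)
    (h : ∀ w, Γ.Adj v w ↔ w = a ∨ w = b ∨ w = c) (h1 : a ≠ b) (h2 : a ≠ c) (h3 : b ≠ c) :
    Γ.degree v = 3 := by
  have : Γ.neighborFinset v = {a, b, c} := by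
    ext w; simp [h]
  rw [← SimpleGraph.card_neighborFinset_eq_degree, this, Finset.card_eq_three]
  exact ⟨a, b, c, h1, h2, h3, rfl⟩

open scoped Classical in
theorem regular [Fintype (G × P n)] (g : Fin n → G) (hn : 2 < n) :
    (Gr g).IsRegularOfDegree 3 := by
  rintro ⟨x, u⟩
  cases u with
  | r => refine deg_of _ _ _ _ _ (fun w => adj_r g x w (by omega)) ?_ ?_ ?_ <;> simp
  | t1 => refine deg_of _ _ _ _ _ (fun w => adj_t1 g x w) ?_ ?_ ?_ <;> simp
  | t2 => refine deg_of _ _ _ _ _ (fun w => adj_t2 g x w) ?_ ?_ ?_ <;> simp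
  | s1 => refine deg_of _ _ _ _ _ (fun w => adj_s1 g x w (by omega)) ?_ ?_ ?_ <;> simp
  | s2 => refine deg_of _ _ _ _ _ (fun w => adj_s2 g x w) ?_ ?_ ?_ <;> simp
  | c => refine deg_of _ _ _ _ _ (fun w => adj_c g x w (by omega)) ?_ ?_ ?_ <;> simp
  | o i =>
    refine deg_of _ _ _ _ _ (fun w => adj_o g x w i) ?_ ?_ ?_ <;> split_ifs <;> simp <;> omega
  | e i =>
    refine deg_of _ _ _ _ _ (fun w => adj_e g x w i) ?_ ?_ ?_ <;> split_ifs <;> simp <;> omega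

/-- Being in a triangle. -/
def T {V : Type*} (Γ : SimpleGraph V) (v : V) : Prop :=
  ∃ a b, Γ.Adj v a ∧ Γ.Adj v b ∧ Γ.Adj a b

/-- A certain 4-cycle condition. -/
def Q {V : Type*} (Γ : SimpleGraph V) (v : V) : Prop :=
  ∃ u w z, Γ.Adj v u ∧ T Γ u ∧ Γ.Adj u w ∧ ¬ T Γ w ∧ Γ.Adj w z ∧ ¬ T Γ z ∧ Γ.Adj z v

theorem T_mono {V : Type*} {Γ : SimpleGraph V} (φ : Γ ≃g Γ) {v : V} (h : T Γ v) :
    T Γ (φ v) := by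
  obtain ⟨a, b, h1, h2, h3⟩ := h
  exact ⟨φ a, φ b, φ.map_adj_iff.2 h1, φ.map_adj_iff.2 h2, φ.map_adj_iff.2 h3⟩

theorem T_iff {V : Type*} {Γ : SimpleGraph V} (φ : Γ ≃g Γ) (v : V) :
    T Γ (φ v) ↔ T Γ v :=
  ⟨fun h => by simpa using T_mono φ.symm h, T_mono φ⟩

theorem Q_mono {V : Type*} {Γ : SimpleGraph V} (φ : Γ ≃g Γ) {v : V} (h : Q Γ v) :
    Q Γ (φ v) := by
  obtain ⟨a, b, c, h1, h2, h3, h4, h5, h6, h7⟩ := h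
  exact ⟨φ a, φ b, φ c, φ.map_adj_iff.2 h1, (T_iff φ a).2 h2, φ.map_adj_iff.2 h3,
    (T_iff φ b).not.2 h4, φ.map_adj_iff.2 h5, (T_iff φ c).not.2 h6, φ.map_adj_iff.2 h7⟩

theorem Q_iff {V : Type*} {Γ : SimpleGraph V} (φ : Γ ≃g Γ) (v : V) :
    Q Γ (φ v) ↔ Q Γ v :=
  ⟨fun h => by simpa using Q_mono φ.symm h, Q_mono φ⟩

/-- types of triangle vertices -/
def isT : P n → Prop
  | .r => True
  | .t1 => True
  | .t2 => True
  | _ => False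

set_option maxHeartbeats 4000000 in
theorem T_Gr (g : Fin n → G) (hn : 2 < n) (hne : ∀ i, g i ≠ 1) (x : G) (u : P n) :
    T (Gr g) (x, u) ↔ isT u := by
  constructor
  · have hne' : ∀ (y : G) i, y * g i ≠ y := fun y i h => hne i (by simpa using h)
    rintro ⟨⟨y, v⟩, ⟨z, w⟩, h1, h2, h3⟩
    cases u <;> simp only [isT] <;> cases v <;> simp [Gr, R] at h1 <;>
      cases w <;> simp [Gr, R] at h2 <;> simp [Gr, R] at h3 <;> grind
  · intro h
    cases u <;> simp only [isT] at h
    · exact ⟨(x, .t1), (x, .t2), by simp [Gr, R], by simp [Gr, R], by simp [Gr, R]⟩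
    · exact ⟨(x, .r), (x, .t2), by simp [Gr, R], by simp [Gr, R], by simp [Gr, R]⟩
    · exact ⟨(x, .r), (x, .t1), by simp [Gr, R], by simp [Gr, R], by simp [Gr, R]⟩

theorem Q_t1 (g : Fin n → G) (hn : 2 < n) (hne : ∀ i, g i ≠ 1) (x : G) :
    Q (Gr g) (x, .t1) := by
  refine ⟨(x, .t2), (x, .s2), (x, .s1), ?_⟩
  simp only [T_Gr g hn hne, isT]
  simp [Gr, R]

theorem Q_t2 (g : Fin n → G) (hn : 2 < n) (hne : ∀ i, g i ≠ 1) (x : G) :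
    Q (Gr g) (x, .t2) := by
  refine ⟨(x, .t1), (x, .s1), (x, .s2), ?_⟩
  simp only [T_Gr g hn hne, isT]
  simp [Gr, R]

theorem not_Q_r (g : Fin n → G) (hn : 2 < n) (hne : ∀ i, g i ≠ 1) (x : G) :
    ¬ Q (Gr g) (x, .r) := by
  rintro ⟨⟨y, u⟩, ⟨z, v⟩, ⟨t, w⟩, h1, h2, h3, h4, h5, h6, h7⟩
  rw [T_Gr g hn hne] at h2 h4 h6
  cases u <;> simp [isT] at h2 <;> simp [Gr, R] at h1 <;>
    cases v <;> simp [isT] at h4 <;> simp [Gr, R] at h3 <;>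
    cases w <;> simp [isT] at h6 <;> simp [Gr, R] at h5 h7

section aut
variable (g : Fin n → G) (hn : 2 < n) (hne : ∀ i, g i ≠ 1) (φ : Gr g ≃g Gr g)
include hn hne

theorem exists_f : ∃ f : G → G, ∀ x, φ (x, .r) = (f x, .r) := by
  suffices h : ∀ x, ∃ y, φ (x, .r) = (y, .r) by
    choose f hf using h
    exact ⟨f, hf⟩
  intro x
  have h1 : T (Gr g) (φ (x, .r)) := (T_iff φ _).2 ((T_Gr g hn hne _ _).2 trivial)
  have h2 : ¬ Q (Gr g) (φ (x, .r)) := (Q_iff φ _).not.2 (not_Q_r g hn hne x)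
  generalize φ (x, .r) = w at h1 h2
  obtain ⟨y, u⟩ := w
  rw [T_Gr g hn hne] at h1
  cases u <;> simp only [isT] at h1
  · exact ⟨y, rfl⟩
  · exact absurd (Q_t1 g hn hne y) h2
  · exact absurd (Q_t2 g hn hne y) h2

theorem rigid : ∃ f : G → G, (∀ x u, φ (x, u) = (f x, u)) ∧ ∀ x i, f (x * g i) = f x * g i := by
  obtain ⟨f, hr⟩ := exists_f g hn hne φ
  have hA : ∀ {a b}, (Gr g).Adj a b → (Gr g).Adj (φ a) (φ b) := fun h => φ.map_adj_iff.2 h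
  have hI : ∀ {a b}, φ a = φ b → a = b := fun h => φ.injective h
  have hT : ∀ x u y v, φ (x, u) = (y, v) → (isT u ↔ isT v) := fun x u y v h => by
    rw [← T_Gr g hn hne x u, ← T_Gr g hn hne y v, ← h, T_iff]
  have h0 : 0 < n := by omega
  have ho0 : ∀ x, φ (x, .o ⟨0, h0⟩) = (f x, .o ⟨0, h0⟩) := by
    intro x
    have h := hA ((adj_r g x _ h0).2 (Or.inr (Or.inr rfl)))
    rw [hr, adj_r g _ _ h0] at h
    rcases h with h | h | h
    · have := hT _ _ _ _ h; simp [isT] at this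
    · have := hT _ _ _ _ h; simp [isT] at this
    · exact h
  have ht1' : ∀ x, φ (x, .t1) = (f x, .t1) ∨ φ (x, .t1) = (f x, .t2) := by
    intro x
    have h := hA ((adj_r g x _ h0).2 (Or.inl rfl))
    rw [hr, adj_r g _ _ h0] at h
    rcases h with h | h | h
    · exact Or.inl h
    · exact Or.inr h
    · have := hT _ _ _ _ h; simp [isT] at this
  -- the key step: break the reflection
  have key : ∀ x, φ (x, .t1) = (f x, .t1) ∧ φ (x, .s1) = (f x, .s1) ∧
      φ (x, .e ⟨0, h0⟩) = (f x, .e ⟨0, h0⟩) := by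
    intro x
    have hs := hA ((adj_t1 g x _).2 (Or.inr (Or.inr rfl)))
    have he := hA ((adj_s1 g x _ h0).2 (Or.inr (Or.inr rfl)))
    have heo := hA ((adj_e g x _ ⟨0, h0⟩).2 (Or.inr (Or.inr rfl)))
    rw [ho0] at heo
    have heo' := heo.symm
    generalize hw : φ (x, .e ⟨0, h0⟩) = w at he heo heo'
    have hTs : ∀ y v, φ (x, .s1) = (y, v) → ¬ isT v := fun y v h => by
      rw [← hT _ _ _ _ h]; simp [isT]
    have hTw : ∀ y v, w = (y, v) → ¬ isT v := fun y v h => by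
      rw [← hT _ _ _ _ (hw.trans h)]; simp [isT]
    have hn1 : ¬ (0 + 1 = n) := by omega
    rcases ht1' x with h | h
    · rw [h, adj_t1] at hs
      rcases hs with hs | hs | hs
      · exact absurd trivial (hTs _ _ hs)
      · exact absurd trivial (hTs _ _ hs)
      · refine ⟨h, hs, ?_⟩
        rw [hs, adj_s1 g _ _ h0] at he
        rcases he with he | he | he
        · exact absurd trivial (hTw _ _ he)
        · rw [he] at heo'
          simp [Gr, R] at heo'
        · exact he
    · rw [h, adj_t2] at hs
      rcases hs with hs | hs | hs
      · exact absurd trivial (hTs _ _ hs)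
      · exact absurd trivial (hTs _ _ hs)
      · exfalso
        rw [hs, adj_s2 g _ _] at he
        rcases he with he | he | he
        · exact absurd trivial (hTw _ _ he)
        · rw [he] at heo'
          simp [Gr, R] at heo'
        · rw [he] at heo'
          simp [Gr, R] at heo'
          omega
  have ht1 := fun x => (key x).1
  have hs1 := fun x => (key x).2.1
  have he0 := fun x => (key x).2.2
  have ht2 : ∀ x, φ (x, .t2) = (f x, .t2) := by
    intro x
    have h := hA ((adj_t1 g x _).2 (Or.inr (Or.inl rfl)))
    rw [ht1, adj_t1] at h
    rcases h with h | h | h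
    · rw [← hr] at h; simpa using hI h
    · exact h
    · rw [← hs1] at h; simpa using hI h
  have hs2 : ∀ x, φ (x, .s2) = (f x, .s2) := by
    intro x
    have h := hA ((adj_t2 g x _).2 (Or.inr (Or.inr rfl)))
    rw [ht2, adj_t2] at h
    rcases h with h | h | h
    · rw [← hr] at h; simpa using hI h
    · rw [← ht1] at h; simpa using hI h
    · exact h
  have hc : ∀ x, φ (x, .c) = (f x, .c) := by
    intro x
    have h := hA ((adj_s2 g x _).2 (Or.inr (Or.inr rfl)))
    rw [hs2, adj_s2] at h
    rcases h with h | h | h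
    · rw [← ht2] at h; simpa using hI h
    · rw [← hs1] at h; simpa using hI h
    · exact h
  have hf : ∀ i : Fin n, (∀ x, φ (x, .o i) = (f x, .o i) ∧ φ (x, .e i) = (f x, .e i)) →
      ∀ x, f (x * g i) = f x * g i := by
    intro i hi x
    have h := hA ((adj_o g x _ i).2 (Or.inr (Or.inr rfl)))
    rw [(hi _).1, (hi _).2] at h
    simpa [Gr, R] using h
  have main : ∀ k (hk : k < n), ∀ x, φ (x, .o ⟨k, hk⟩) = (f x, .o ⟨k, hk⟩) ∧
      φ (x, .e ⟨k, hk⟩) = (f x, .e ⟨k, hk⟩) := by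
    intro k
    induction k using Nat.strong_induction_on with
    | _ k ih =>
      intro hk x
      rcases k with _ | k
      · exact ⟨ho0 x, he0 x⟩
      · have hk' : k < n := by omega
        have ihk := ih k (by omega) hk'
        have hfk := hf ⟨k, hk'⟩ ihk
        have hk1 : ¬ (k + 1 = n) := by omega
        constructor
        · have h : (Gr g).Adj (x, .o ⟨k, hk'⟩) (x, .o ⟨k + 1, hk⟩) := by simp [Gr, R]
          replace h := hA h
          rw [(ihk x).1, adj_o] at h
          rcases h with h | h | h
          · exfalso
            split_ifs at h with hz
            · rw [← hr] at h; simpa using hI h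
            · simp only at hz h
              rw [← (ih (k - 1) (by omega) (by omega) x).1] at h
              have := hI h
              simp at this
              omega
          · simpa [hk1] using h
          · rw [← hfk, ← (ihk _).2] at h
            simpa using hI h
        · have h : (Gr g).Adj (x, .e ⟨k, hk'⟩) (x, .e ⟨k + 1, hk⟩) := by simp [Gr, R]
          replace h := hA h
          rw [(ihk x).2, adj_e] at h
          rcases h with h | h | h
          · exfalso
            split_ifs at h with hz
            · rw [← hs1] at h; simpa using hI h
            · simp only at hz h
              rw [← (ih (k - 1) (by omega) (by omega) x).2] at h
              have := hI h
              simp at this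
              omega
          · simpa [hk1] using h
          · have h2 : f x * (g ⟨k, hk'⟩)⁻¹ = f (x * (g ⟨k, hk'⟩)⁻¹) := by
              rw [mul_inv_eq_iff_eq_mul, ← hfk]; simp
            rw [h2, ← (ihk _).1] at h
            simpa using hI h
  refine ⟨f, ?_, fun x i => hf i (main i.1 i.2) x⟩
  intro x u
  cases u with
  | r => exact hr x
  | t1 => exact ht1 x
  | t2 => exact ht2 x
  | s1 => exact hs1 x
  | s2 => exact hs2 x
  | c => exact hc x
  | o i => exact (main i.1 i.2 x).1
  | e i => exact (main i.1 i.2 x).2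

end aut

/-- Left translation. -/
def lt (g : Fin n → G) (h : G) : Gr g ≃g Gr g where
  toFun p := (h * p.1, p.2)
  invFun p := (h⁻¹ * p.1, p.2)
  left_inv p := by simp
  right_inv p := by simp
  map_rel_iff' := by
    rintro ⟨x, u⟩ ⟨y, v⟩
    cases u <;> cases v <;> simp [Gr, R, mul_assoc]

/-- Left translation as a homomorphism. -/
def ltHom (g : Fin n → G) : G →* (Gr g ≃g Gr g) where
  toFun := lt g
  map_one' := by ext p <;> simp [lt]
  map_mul' a b := by ext p <;> simp [lt, mul_assoc]

theorem ltHom_bij (g : Fin n → G) (hn : 2 < n) (hne : ∀ i, g i ≠ 1)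
    (hgen : Subgroup.closure (Set.range g) = ⊤) : Function.Bijective (ltHom g) := by
  constructor
  · intro a b h
    have := congrArg (fun φ : Gr g ≃g Gr g => (φ (1, .r)).1) h
    simpa [ltHom, lt] using this
  · intro φ
    obtain ⟨f, h1, h2⟩ := rigid g hn hne φ
    have h3 : ∀ y x, f (x * y) = f x * y := by
      intro y
      have hy : y ∈ Subgroup.closure (Set.range g) := by rw [hgen]; trivial
      induction hy using Subgroup.closure_induction with
      | mem y hy => obtain ⟨i, rfl⟩ := hy; exact fun x => h2 x i
      | one => simp
      | mul a b _ _ ha hb => intro x; rw [← mul_assoc, hb, ha, mul_assoc]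
      | inv a _ ha => intro x; rw [eq_mul_inv_iff_mul_eq, ← ha]; simp
    refine ⟨f 1, ?_⟩
    ext1 ⟨x, u⟩
    rw [h1]
    have := h3 x 1
    simp [ltHom, lt, ← this]

/-- Enumerating the vertex types. -/
def eqv (n : ℕ) : P n ≃ (Fin n ⊕ Fin n) ⊕ Fin 6 where
  toFun
    | .o i => .inl (.inl i)
    | .e i => .inl (.inr i)
    | .r => .inr 0
    | .t1 => .inr 1
    | .t2 => .inr 2
    | .s1 => .inr 3
    | .s2 => .inr 4
    | .c => .inr 5
  invFun
    | .inl (.inl i) => .o i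
    | .inl (.inr i) => .e i
    | .inr 0 => .r
    | .inr 1 => .t1
    | .inr 2 => .t2
    | .inr 3 => .s1
    | .inr 4 => .s2
    | .inr 5 => .c
  left_inv u := by cases u <;> rfl
  right_inv u := by
    rcases u with (i | i) | i
    · rfl
    · rfl
    · fin_cases i <;> rfl

/-- Conjugating automorphisms by an isomorphism. -/
def conj {V W : Type*} {A : SimpleGraph V} {B : SimpleGraph W} (ψ : A ≃g B) :
    (B ≃g B) ≃* (A ≃g A) where
  toFun φ := (ψ.trans φ).trans ψ.symm
  invFun φ := (ψ.symm.trans φ).trans ψ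
  left_inv φ := by ext v; simp
  right_inv φ := by ext v; simp
  map_mul' a b := by ext v; simp

end FruchtCubic

open scoped Classical in
/-- For `n > 2` and a finite group `G` generated by `n` pairwise distinct non-identity
elements, there is a cubic (3-regular) finite simple graph on exactly `(2n+6) * |G|`
vertices whose automorphism group is isomorphic to `G`. -/
theorem exists_cubic_graph_on_card_aut_mulEquiv
    (n : ℕ) (hn : 2 < n) (G : Type*) [Group G] [Fintype G] (g : Fin n → G)
    (hinj : Function.Injective g) (hne : ∀ i, g i ≠ 1)
    (hgen : Subgroup.closure (Set.range g) = ⊤) :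
    ∃ Γ : SimpleGraph (Fin ((2 * n + 6) * Fintype.card G)),
      Γ.IsRegularOfDegree 3 ∧ Nonempty ((Γ ≃g Γ) ≃* G) := by
  letI : Fintype (FruchtCubic.P n) := Fintype.ofEquiv _ (FruchtCubic.eqv n).symm
  have hcard : Fintype.card (G × FruchtCubic.P n) = (2 * n + 6) * Fintype.card G := by
    rw [Fintype.card_prod, Fintype.card_congr (FruchtCubic.eqv n)]
    simp
    ring
  let ε := Fintype.equivFinOfCardEq hcard
  let ψ : (FruchtCubic.Gr g) ≃g (FruchtCubic.Gr g).map ε.toEmbedding :=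
    SimpleGraph.Iso.map ε (FruchtCubic.Gr g)
  refine ⟨(FruchtCubic.Gr g).map ε.toEmbedding, ?_, ⟨?_⟩⟩
  · intro v
    obtain ⟨w, rfl⟩ := ψ.surjective v
    have := FruchtCubic.regular g hn w
    rw [← this]
    convert ψ.degree_eq w
  · exact (FruchtCubic.conj ψ).trans
      (MulEquiv.ofBijective _ (FruchtCubic.ltHom_bij g hn hne hgen)).symm
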